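/- arXiv:1605.00978 — 2 statements merged into one kernel-verified Lean document; each statement's English description precedes it below -/
import Mathlib

section
/- (a) If 𝓜° is a standard module with |D_{𝓜°}| = d° and 0 ≤ a ≤ d°, then the ℛ-submodule z^a𝓜° ⊆ 𝒪 satisfies z^{2δ}𝒪 ⊆ z^a𝓜° and dim_ℂ(𝒪/z^a𝓜°) = δ − d° + a. (b) Conversely, if 𝓜 ⊆ 𝒪 is an ℛ-submodule with z^{2δ}𝒪 ⊆ 𝓜 and dim_ℂ(𝒪/𝓜) = δ − d for some 0 ≤ d ≤ δ, then, setting a = min{ν(x) : 0 ≠ x ∈ 𝓜}, every element of 𝓜 is divisible by z^a and the module 𝓜° = {f ∈ 𝒪 : z^a f ∈ 𝓜} is a standard module with |D_{𝓜°}| = d + a. -/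
open PowerSeries

noncomputable section

/-- `𝒪 = ℂ⟦z⟧`, the ring of formal power series over `ℂ`. -/
abbrev 𝒪 : Type := PowerSeries ℂ

/-- `ν(f)`: the order of a power series (least `n` with nonzero coefficient);
only meaningful for `f ≠ 0`. -/
noncomputable def ord (f : 𝒪) : ℕ := sInf {n : ℕ | PowerSeries.coeff n f ≠ 0}

/-- The value semigroup `Γ = {ν(x) : 0 ≠ x ∈ ℛ}` of a subalgebra `ℛ ⊆ 𝒪`. -/
def SGamma (R : Subalgebra ℂ 𝒪) : Set ℕ := {n | ∃ x ∈ R, x ≠ (0:𝒪) ∧ ord x = n}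

/-- The set of gaps `G = ℕ ∖ Γ`. -/
def Gaps (R : Subalgebra ℂ 𝒪) : Set ℕ := (SGamma R)ᶜ

/-- `Δ` is a `Γ`-module: `Γ + Δ ⊆ Δ`. -/
def IsGammaModule (Γ Δ : Set ℕ) : Prop := ∀ a ∈ Γ, ∀ d ∈ Δ, a + d ∈ Δ

/-- `Δ_𝓜 = {ν(x) : 0 ≠ x ∈ 𝓜}` for an `ℛ`-submodule `𝓜 ⊆ 𝒪`. -/
def DeltaM (R : Subalgebra ℂ 𝒪) (M : Submodule ↥R 𝒪) : Set ℕ :=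
  {n | ∃ x ∈ M, x ≠ (0:𝒪) ∧ ord x = n}

/-- `D_𝓜 = Δ_𝓜 ∩ G`, the set of added gaps. -/
def Dset (R : Subalgebra ℂ 𝒪) (M : Submodule ↥R 𝒪) : Set ℕ := DeltaM R M ∩ Gaps R

/-- A standard module: a finitely generated `ℛ`-submodule of `𝒪` containing an
element of order `0`. -/
def IsStd (R : Subalgebra ℂ 𝒪) (M : Submodule ↥R 𝒪) : Prop :=
  M.FG ∧ ∃ x ∈ M, x ≠ (0:𝒪) ∧ ord x = 0

/-- `c ≥ 1` is the conductor of `ℛ`: the minimal exponent with `z^c𝒪 ⊆ ℛ`. -/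
def HasConductor (R : Subalgebra ℂ 𝒪) (c : ℕ) : Prop :=
  1 ≤ c ∧ (∀ f : 𝒪, (PowerSeries.X : 𝒪)^c * f ∈ R) ∧
    ∀ c' : ℕ, (∀ f : 𝒪, (PowerSeries.X : 𝒪)^c' * f ∈ R) → c ≤ c'

/-- `z^j𝒪` as a `ℂ`-submodule of `𝒪`. -/
def zO (j : ℕ) : Submodule ℂ 𝒪 :=
  LinearMap.range (LinearMap.mulLeft ℂ ((PowerSeries.X : 𝒪)^j))

/-- `𝔪𝓜` as a `ℂ`-submodule of `𝒪`, where `𝔪 = {x ∈ ℛ : x = 0 or ν(x) > 0}`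
is the maximal ideal of `ℛ`. -/
def mSmul (R : Subalgebra ℂ 𝒪) (M : Submodule ↥R 𝒪) : Submodule ℂ 𝒪 :=
  Submodule.span ℂ {z : 𝒪 | ∃ r ∈ (R : Set 𝒪), ∃ y ∈ M, (r = 0 ∨ 0 < ord r) ∧ z = r * y}

/-- `dim_ℂ (A / B)` for `ℂ`-subspaces; intended for `B ≤ A`. -/
noncomputable def quotDim (A B : Submodule ℂ 𝒪) : ℕ :=
  Module.finrank ℂ (↥A ⧸ Submodule.comap A.subtype B)

/-- `D_i = D_0 ∪ {g_1, …, g_i}` (the gaps `g` are indexed by `1, …, m`). -/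
def DFlagSet (D0 : Set ℕ) (g : ℕ → ℕ) (i : ℕ) : Set ℕ := D0 ∪ g '' Set.Icc 1 i

/-- `(D_0, …, D_m)` with `D_i = D_0 ∪ {g_1 < … < g_i}` is a `D`-flag:
all `Δ_i = Γ ∪ D_i` are `Γ`-modules. -/
def IsDFlag (R : Subalgebra ℂ 𝒪) (m : ℕ) (D0 : Set ℕ) (g : ℕ → ℕ) : Prop :=
  D0 ⊆ Gaps R ∧ StrictMonoOn g (Set.Icc 1 m) ∧
  (∀ i, 1 ≤ i → i ≤ m → g i ∈ Gaps R \ D0) ∧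
  (∀ i ≤ m, IsGammaModule (SGamma R) (SGamma R ∪ DFlagSet D0 g i))

/-- A `D`-flag is admissible if it is realized by a flag of standard modules. -/
def IsAdmissibleFlag (R : Subalgebra ℂ 𝒪) (m : ℕ) (D0 : Set ℕ) (g : ℕ → ℕ) : Prop :=
  ∃ MM : ℕ → Submodule ↥R 𝒪, (∀ i, i < m → MM i ≤ MM (i+1)) ∧
    ∀ i ≤ m, IsStd R (MM i) ∧ Dset R (MM i) = DFlagSet D0 g i

/-- The subalgebra `ℂ[z^a, z^b + z^c] + z^N ℂ⟦z⟧` of `𝒪`. -/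
def Rring (a b c N : ℕ) : Subalgebra ℂ 𝒪 where
  carrier := {f : 𝒪 | ∃ p ∈ Algebra.adjoin ℂ
      ({(PowerSeries.X : 𝒪)^a, (PowerSeries.X : 𝒪)^b + (PowerSeries.X : 𝒪)^c} : Set 𝒪),
    ∃ g : 𝒪, f = p + (PowerSeries.X : 𝒪)^N * g}
  mul_mem' := by
    rintro x y ⟨p, hp, gx, rfl⟩ ⟨q, hq, gy, rfl⟩
    exact ⟨p * q, mul_mem hp hq,
      p * gy + gx * q + (PowerSeries.X : 𝒪)^N * (gx * gy), by ring⟩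
  one_mem' := ⟨1, one_mem _, 0, by ring⟩
  add_mem' := by
    rintro x y ⟨p, hp, gx, rfl⟩ ⟨q, hq, gy, rfl⟩
    exact ⟨p + q, add_mem hp hq, gx + gy, by ring⟩
  zero_mem' := ⟨0, zero_mem _, 0, by ring⟩
  algebraMap_mem' := fun r => ⟨algebraMap ℂ 𝒪 r, Subalgebra.algebraMap_mem _ r, 0, by ring⟩

/-- The ring `ℂ⟦z^4, z^{2u}+z^v⟧ = ℂ[z^4, z^{2u}+z^v] + z^{4u+v}ℂ⟦z⟧` for the
plane curve singularity with Puiseux exponents `(4, 2u, v)`. -/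
def Rcal (u v : ℕ) : Subalgebra ℂ 𝒪 := Rring 4 (2*u) v (4*u+v)

/-- The gap counting function `γ_Δ(ℓ) = |[ℓ,∞) ∖ Δ|`. -/
noncomputable def gapCount (Δ : Set ℕ) (ℓ : ℕ) : ℕ := Set.ncard {k : ℕ | ℓ ≤ k ∧ k ∉ Δ}

/-- `n = n(D)`: the smallest odd number in `(Δ ∪ {v}) ∩ [2u, ∞)`. -/
noncomputable def nOdd (u v : ℕ) (Δ : Set ℕ) : ℕ :=
  sInf {k : ℕ | Odd k ∧ 2*u ≤ k ∧ (k ∈ Δ ∨ k = v)}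

/-- The dimension change `μ_{D,g}` of Theorem `dimprop` (for the family `(4,2u,v)`),
where `Γ` is the value semigroup. -/
noncomputable def muDim (u v : ℕ) (Γ : Set ℕ) (D : Set ℕ) (gp : ℕ) : ℕ :=
  let Δ : Set ℕ := Γ ∪ D
  let Δ' : Set ℕ := Δ ∪ {gp}
  let n : ℕ := nOdd u v Δ
  if gp % 4 = 2 then
    (gapCount Δ' gp - gapCount Δ' (gp+4)) - (gapCount Δ' (gp+n) - gapCount Δ' (gp+4+n))
  else gapCount Δ' gp - gapCount Δ' (gp+4)

/-! Let `V` be a subspace of `𝒪` containing some `z^N𝒪`. Eliminating leading terms one order at a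
time shows that the series whose coefficients vanish at all orders occurring in `V` form a
complement of `V`, so `dim 𝒪/V` is the number of naturals that are not orders of elements of `V`.
For a standard module `𝓜` this number is `δ - |D_𝓜|`, and multiplication by `z^a` increases it by
`a`. If `n ∉ Δ_𝓜`, then for each `k ≤ n` either `k ∉ Γ` or `n - k ∉ Δ_𝓜`, whence
`n + 1 ≤ δ + (δ - |D_𝓜|)`; this gives the exponent `2δ`. Conversely, a nonzero module is `z^a` times
a standard module, with `a` its least order, and the dimension formula can be read backwards. -/

section NaturalNumbers

lemma ncard_compl_image_add_left (a : ℕ) {Δ : Set ℕ} (hΔ : Δᶜ.Finite) :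
    ((fun n => a + n) '' Δ)ᶜ.ncard = Δᶜ.ncard + a := by
  have hcompl : ((fun n => a + n) '' Δ)ᶜ = (fun n => a + n) '' Δᶜ ∪ Set.Iio a := by
    ext n
    rcases lt_or_ge n a with hn | hn
    · simp [hn, (Nat.lt_add_right _ hn).ne']
    · obtain ⟨m, rfl⟩ := Nat.exists_eq_add_of_le hn
      simp
  have hdisj : Disjoint ((fun n => a + n) '' Δᶜ) (Set.Iio a) := by
    rw [Set.disjoint_left]
    rintro _ ⟨n, _, rfl⟩
    simp
  rw [hcompl, Set.ncard_union_eq hdisj (hΔ.image _) (Set.finite_Iio a),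
    Set.ncard_image_of_injective _ (add_right_injective a), Set.ncard_Iio_nat]

lemma IsGammaModule.lt_ncard_compl_add_ncard_compl {Γ Δ : Set ℕ} (h : IsGammaModule Γ Δ)
    (hΓ : Γᶜ.Finite) (hΔ : Δᶜ.Finite) {n : ℕ} (hn : n ∉ Δ) : n < Γᶜ.ncard + Δᶜ.ncard := by
  have hcover : Set.Iic n ⊆ Γᶜ ∪ (fun k => n - k) '' Δᶜ := by
    intro k (hk : k ≤ n)
    by_cases hkΓ : k ∈ Γ
    · refine Or.inr ⟨n - k, fun hkΔ => hn ?_, Nat.sub_sub_self hk⟩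
      simpa only [Nat.add_sub_cancel' hk] using h k hkΓ (n - k) hkΔ
    · exact Or.inl hkΓ
  calc n < (Set.Iic n).ncard := by simp
    _ ≤ (Γᶜ ∪ (fun k => n - k) '' Δᶜ).ncard := Set.ncard_le_ncard hcover (hΓ.union (hΔ.image _))
    _ ≤ Γᶜ.ncard + ((fun k => n - k) '' Δᶜ).ncard := Set.ncard_union_le _ _
    _ ≤ Γᶜ.ncard + Δᶜ.ncard := Nat.add_le_add_left (Set.ncard_image_le hΔ) _

end NaturalNumbers

section ValueSet

variable {A : Type*} [Semiring A]

lemma ne_zero_of_order_eq_natCast {f : A⟦X⟧} {n : ℕ} (hf : f.order = n) : f ≠ 0 :=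
  order_finite_iff_ne_zero.1 (hf ▸ ENat.natCast_lt_top n)

lemma X_pow_dvd_iff_le_order {f : A⟦X⟧} {n : ℕ} : X ^ n ∣ f ↔ (n : ℕ∞) ≤ f.order := by
  rw [order_eq_emultiplicity_X, pow_dvd_iff_le_emultiplicity]

/-- The orders of the nonzero elements of a set of power series. Zero contributes nothing, since
`PowerSeries.order` gives it the value `⊤`. -/
def valueSet (S : Set A⟦X⟧) : Set ℕ := {n | ∃ f ∈ S, f.order = n}

lemma exists_mem_valueSet {S : Set A⟦X⟧} {f : A⟦X⟧} (hf : f ∈ S) (hf0 : f ≠ 0) :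
    ∃ n ∈ valueSet S, f.order = n :=
  ⟨f.order.toNat, ⟨f, hf, (coe_toNat_order hf0).symm⟩, (coe_toNat_order hf0).symm⟩

lemma X_pow_sInf_valueSet_dvd {S : Set A⟦X⟧} {f : A⟦X⟧} (hf : f ∈ S) :
    X ^ sInf (valueSet S) ∣ f := by
  by_cases hf0 : f = 0
  · exact hf0 ▸ dvd_zero _
  · obtain ⟨n, hn, hfn⟩ := exists_mem_valueSet hf hf0
    rw [X_pow_dvd_iff_le_order, hfn]
    exact_mod_cast Nat.sInf_le hn

lemma mem_valueSet_of_X_pow_mul_mem [Nontrivial A] {S : Set A⟦X⟧} {N n : ℕ}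
    (hS : ∀ f, X ^ N * f ∈ S) (hn : N ≤ n) : n ∈ valueSet S := by
  refine ⟨X ^ n, ?_, order_X_pow n⟩
  rw [← Nat.add_sub_cancel' hn, pow_add]
  exact hS _

lemma finite_compl_valueSet [Nontrivial A] {S : Set A⟦X⟧} {N : ℕ} (hS : ∀ f, X ^ N * f ∈ S) :
    (valueSet S)ᶜ.Finite :=
  (Set.finite_Iio N).subset fun _ hn =>
    not_le.1 fun hNn => hn (mem_valueSet_of_X_pow_mul_mem hS hNn)

lemma valueSet_image_X_pow_mul [Nontrivial A] [NoZeroDivisors A] (a : ℕ) (S : Set A⟦X⟧) :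
    valueSet ((fun f => X ^ a * f) '' S) = (fun n => a + n) '' valueSet S := by
  ext n
  constructor
  · rintro ⟨_, ⟨f, hf, rfl⟩, hfn⟩
    have hf0 : f ≠ 0 := right_ne_zero_of_mul (ne_zero_of_order_eq_natCast hfn)
    obtain ⟨m, hm, hfm⟩ := exists_mem_valueSet hf hf0
    rw [order_mul, order_X_pow, hfm] at hfn
    exact ⟨m, hm, by exact_mod_cast hfn⟩
  · rintro ⟨m, ⟨f, hf, hfm⟩, rfl⟩
    exact ⟨X ^ a * f, ⟨f, hf, rfl⟩, by rw [order_mul, order_X_pow, hfm, Nat.cast_add]⟩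

end ValueSet

section VanishingCoeffs

variable {A : Type*} [Ring A]

/-- The power series whose coefficients vanish at all indices in `S`. -/
def vanishingCoeffs (A : Type*) [Ring A] (S : Set ℕ) : Submodule A A⟦X⟧ :=
  LinearMap.ker (LinearMap.pi fun n : S => coeff (R := A) n)

lemma mem_vanishingCoeffs {S : Set ℕ} {f : A⟦X⟧} :
    f ∈ vanishingCoeffs A S ↔ ∀ n ∈ S, coeff n f = 0 := by
  simp [vanishingCoeffs, funext_iff]

lemma bijective_coeff_vanishingCoeffs (S : Set ℕ) :
    Function.Bijective
      ((LinearMap.pi fun n : ↥Sᶜ => coeff (R := A) n).domRestrict (vanishingCoeffs A S)) := by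
  constructor
  · rw [← LinearMap.ker_eq_bot, LinearMap.ker_eq_bot']
    rintro ⟨f, hf⟩ hfS
    ext n
    by_cases hn : n ∈ S
    · exact mem_vanishingCoeffs.1 hf n hn
    · exact congrFun hfS ⟨n, hn⟩
  · intro g
    let f : A⟦X⟧ := mk (Function.extend Subtype.val g 0)
    have hf : f ∈ vanishingCoeffs A S := by
      refine mem_vanishingCoeffs.2 fun n hn => ?_
      rw [coeff_mk, Function.extend_apply' _ _ _ (by rintro ⟨m, rfl⟩; exact m.2 hn), Pi.zero_apply]
    refine ⟨⟨f, hf⟩, funext fun n => ?_⟩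
    exact (coeff_mk _ _).trans (Subtype.val_injective.extend_apply g 0 n)

end VanishingCoeffs

section Subspace

variable {K : Type*} [Field K] {V : Submodule K K⟦X⟧} {N n : ℕ}

lemma dvd_X_pow_of_order_eq {f : K⟦X⟧} {n : ℕ} (hf : f.order = n) : f ∣ X ^ n := by
  have hf0 : f ≠ 0 := ne_zero_of_order_eq_natCast hf
  rw [← X_pow_order_mul_divXPowOrder (f := f), hf, ENat.toNat_natCast]
  exact (isUnit_divided_by_X_pow_order hf0).mul_right_dvd.2 dvd_rfl

lemma mem_of_X_pow_dvd_of_mem_valueSet (hn : n ∈ valueSet (V : Set K⟦X⟧))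
    (hV : ∀ f, X ^ (n + 1) ∣ f → f ∈ V) {f : K⟦X⟧} (hf : X ^ n ∣ f) : f ∈ V := by
  obtain ⟨v, hv, hvn⟩ := hn
  obtain ⟨hvn, hv_lt⟩ := order_eq_nat.1 hvn
  have hsub : f - (coeff n f / coeff n v) • v ∈ V := by
    refine hV _ (X_pow_dvd_iff.2 fun m hm => ?_)
    rcases Nat.lt_succ_iff_lt_or_eq.1 hm with hm | rfl
    · simp [X_pow_dvd_iff.1 hf m hm, hv_lt m hm]
    · simp [div_mul_cancel₀ _ hvn]
  exact (V.sub_mem_iff_left (V.smul_mem _ hv)).1 hsub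

lemma X_pow_mul_mem_of_Ici_subset_valueSet (hN : ∀ f, X ^ N * f ∈ V)
    (hn : Set.Ici n ⊆ valueSet (V : Set K⟦X⟧)) (f : K⟦X⟧) : X ^ n * f ∈ V := by
  have hmax : ∀ g, X ^ max n N ∣ g → g ∈ V := by
    intro g hg
    obtain ⟨h, rfl⟩ := (pow_dvd_pow X (le_max_right n N)).trans hg
    exact hN h
  have hmem : ∀ g, X ^ n ∣ g → g ∈ V :=
    Nat.decreasingInduction' (P := fun k => ∀ g, X ^ k ∣ g → g ∈ V)
      (fun k _ hnk hk _ => mem_of_X_pow_dvd_of_mem_valueSet (hn hnk) hk) (le_max_left n N) hmax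
  exact hmem _ (dvd_mul_right _ _)

lemma isCompl_vanishingCoeffs_valueSet (hN : ∀ f, X ^ N * f ∈ V) :
    IsCompl V (vanishingCoeffs K (valueSet (V : Set K⟦X⟧))) := by
  set W := vanishingCoeffs K (valueSet (V : Set K⟦X⟧))
  constructor
  · refine Submodule.disjoint_def.2 fun f hfV hfW => by_contra fun hf0 => ?_
    obtain ⟨n, hn, hfn⟩ := exists_mem_valueSet hfV hf0
    exact (order_eq_nat.1 hfn).1 (mem_vanishingCoeffs.1 hfW n hn)
  · have hsup : Set.Ici 0 ⊆ valueSet ((V ⊔ W : Submodule K K⟦X⟧) : Set K⟦X⟧) := by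
      intro n _
      by_cases hn : n ∈ valueSet (V : Set K⟦X⟧)
      · obtain ⟨v, hv, hvn⟩ := hn
        exact ⟨v, Submodule.mem_sup_left hv, hvn⟩
      · refine ⟨X ^ n, Submodule.mem_sup_right (mem_vanishingCoeffs.2 fun m hm => ?_),
          order_X_pow n⟩
        rw [coeff_X_pow, if_neg (ne_of_mem_of_not_mem hm hn)]
    refine codisjoint_iff.2 (eq_top_iff.2 fun f _ => ?_)
    simpa only [pow_zero, one_mul] using X_pow_mul_mem_of_Ici_subset_valueSet
      (fun g => Submodule.mem_sup_left (hN g)) hsup f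

/-- The coefficients at the non-values of `V` are coordinates on the quotient by `V`. -/
def quotientEquivCoeffs (hN : ∀ f, X ^ N * f ∈ V) :
    (K⟦X⟧ ⧸ V) ≃ₗ[K] (↥(valueSet (V : Set K⟦X⟧))ᶜ → K) :=
  (Submodule.quotientEquivOfIsCompl V _ (isCompl_vanishingCoeffs_valueSet hN)).trans
    (LinearEquiv.ofBijective _ (bijective_coeff_vanishingCoeffs _))

lemma finiteDimensional_quotient (hN : ∀ f, X ^ N * f ∈ V) :
    FiniteDimensional K (K⟦X⟧ ⧸ V) :=
  have := (finite_compl_valueSet hN).to_subtype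
  Module.Finite.equiv (quotientEquivCoeffs hN).symm

lemma finrank_quotient_eq_ncard_compl_valueSet (hN : ∀ f, X ^ N * f ∈ V) :
    Module.finrank K (K⟦X⟧ ⧸ V) = (valueSet (V : Set K⟦X⟧))ᶜ.ncard := by
  have := (finite_compl_valueSet hN).fintype
  rw [(quotientEquivCoeffs hN).finrank_eq, Module.finrank_fintype_fun_eq_card,
    ← Nat.card_eq_fintype_card, Nat.card_coe_set_eq]

end Subspace

section SubmoduleOverSubalgebra

variable {A : Type*} [CommRing A] {R : Subalgebra A A⟦X⟧} {M : Submodule R A⟦X⟧}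

/-- The gaps `G = ℕ ∖ Γ` of a subalgebra; their number is `δ`. -/
def gapSet (R : Subalgebra A A⟦X⟧) : Set ℕ := (valueSet (R : Set A⟦X⟧))ᶜ

/-- The set `D_𝓜 = Δ_𝓜 ∩ G` of gaps of `R` that are orders of elements of `M`. -/
def addedGapSet (M : Submodule R A⟦X⟧) : Set ℕ := valueSet (M : Set A⟦X⟧) ∩ gapSet R

lemma X_pow_mul_mem_map_X_pow {N : ℕ} (hN : ∀ f, X ^ N * f ∈ M) (a : ℕ) (f : A⟦X⟧) :
    X ^ (N + a) * f ∈ M.map (LinearMap.mulLeft R (X ^ a)) :=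
  ⟨X ^ N * f, hN f, by rw [LinearMap.mulLeft_apply, pow_add]; ring⟩

lemma map_comap_X_pow_sInf_valueSet (M : Submodule R A⟦X⟧) :
    (M.comap (LinearMap.mulLeft R (X ^ sInf (valueSet (M : Set A⟦X⟧))))).map
      (LinearMap.mulLeft R (X ^ sInf (valueSet (M : Set A⟦X⟧)))) = M :=
  Submodule.map_comap_eq_self fun _ hf =>
    (X_pow_sInf_valueSet_dvd hf).imp fun _ => Eq.symm

section Domain

variable [IsDomain A]

lemma valueSet_map_X_pow (a : ℕ) (M : Submodule R A⟦X⟧) :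
    valueSet (M.map (LinearMap.mulLeft R (X ^ a)) : Set A⟦X⟧) =
      (fun n => a + n) '' valueSet (M : Set A⟦X⟧) :=
  valueSet_image_X_pow_mul a (M : Set A⟦X⟧)

lemma isGammaModule_valueSet (M : Submodule R A⟦X⟧) :
    IsGammaModule (valueSet (R : Set A⟦X⟧)) (valueSet (M : Set A⟦X⟧)) := by
  rintro k ⟨r, hr, hrk⟩ n ⟨f, hf, hfn⟩
  exact ⟨r * f, M.smul_mem ⟨r, hr⟩ hf, by rw [order_mul, hrk, hfn, Nat.cast_add]⟩

lemma ncard_compl_valueSet_add_ncard_addedGapSet {c : ℕ} (hc : ∀ f, X ^ c * f ∈ R)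
    (hM : 0 ∈ valueSet (M : Set A⟦X⟧)) :
    (valueSet (M : Set A⟦X⟧))ᶜ.ncard + (addedGapSet M).ncard = (gapSet R).ncard := by
  have hcompl : (valueSet (M : Set A⟦X⟧))ᶜ = gapSet R \ valueSet (M : Set A⟦X⟧) := by
    refine (Set.inter_eq_right.2 ?_).symm
    exact Set.compl_subset_compl.2 fun k hk => isGammaModule_valueSet M k hk 0 hM
  rw [hcompl, addedGapSet, Set.inter_comm, add_comm]
  exact Set.ncard_inter_add_ncard_sdiff_eq_ncard _ _ (finite_compl_valueSet hc)

lemma zero_mem_valueSet_comap_X_pow_sInf (hM : M ≠ ⊥) :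
    0 ∈ valueSet
      (M.comap (LinearMap.mulLeft R (X ^ sInf (valueSet (M : Set A⟦X⟧)))) : Set A⟦X⟧) := by
  obtain ⟨x, hx, hx0⟩ := M.exists_mem_ne_zero_of_ne_bot hM
  obtain ⟨n, hn, -⟩ := exists_mem_valueSet hx hx0
  have hmin := Nat.sInf_mem ⟨n, hn⟩
  set a := sInf (valueSet (M : Set A⟦X⟧))
  rw [← map_comap_X_pow_sInf_valueSet M, valueSet_map_X_pow] at hmin
  obtain ⟨m, hm, ham⟩ := hmin
  rwa [Nat.add_eq_left.1 ham] at hm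

end Domain

end SubmoduleOverSubalgebra

section ConductorSubalgebra

variable {K : Type*} [Field K] {R : Subalgebra K K⟦X⟧} {M : Submodule R K⟦X⟧} {c : ℕ}

lemma X_pow_mul_mem_of_mem_valueSet (hc : ∀ f, X ^ c * f ∈ R) {n : ℕ}
    (hn : n ∈ valueSet (M : Set K⟦X⟧)) (f : K⟦X⟧) : X ^ (c + n) * f ∈ M := by
  obtain ⟨x, hx, hxn⟩ := hn
  obtain ⟨g, hg⟩ := dvd_X_pow_of_order_eq hxn
  have hmem : X ^ c * (g * f) * x ∈ M := M.smul_mem ⟨_, hc (g * f)⟩ hx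
  rw [pow_add, hg]
  convert hmem using 1
  ring

lemma isNoetherian_of_X_pow_mul_mem (hc : ∀ f, X ^ c * f ∈ R) : IsNoetherian R K⟦X⟧ := by
  refine ⟨fun M => ?_⟩
  rcases eq_or_ne M ⊥ with rfl | hM
  · exact Submodule.fg_bot
  obtain ⟨x, hx, hx0⟩ := M.exists_mem_ne_zero_of_ne_bot hM
  -- `R x` already has finite codimension, so `M / R x` is finite-dimensional.
  let P : Submodule R K⟦X⟧ := Submodule.span R {x}
  have hPM : P ≤ M := (Submodule.span_singleton_le_iff_mem x M).2 hx
  obtain ⟨n, hn, -⟩ := exists_mem_valueSet (S := P) (Submodule.mem_span_singleton_self x) hx0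
  have : Module.Finite K (K⟦X⟧ ⧸ P) :=
    finiteDimensional_quotient (V := P.restrictScalars K) (X_pow_mul_mem_of_mem_valueSet hc hn)
  refine Submodule.fg_of_fg_map_of_fg_inf_ker P.mkQ ?_ ?_
  · exact .of_restrictScalars K (IsNoetherian.noetherian ((M.map P.mkQ).restrictScalars K))
  · rw [Submodule.ker_mkQ, inf_eq_right.2 hPM]
    exact Submodule.fg_span_singleton x

lemma X_pow_mul_mem_of_two_mul_ncard_gapSet_le (hc : ∀ f, X ^ c * f ∈ R)
    (hM : 0 ∈ valueSet (M : Set K⟦X⟧)) {n : ℕ}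
    (hn : 2 * (gapSet R).ncard ≤ n + (addedGapSet M).ncard) (f : K⟦X⟧) : X ^ n * f ∈ M := by
  have hcM : ∀ g, X ^ c * g ∈ M := X_pow_mul_mem_of_mem_valueSet hc hM
  have hvalues : Set.Ici n ⊆ valueSet (M : Set K⟦X⟧) := by
    intro m (hm : n ≤ m)
    by_contra hmM
    have hlt : m < (gapSet R).ncard + (valueSet (M : Set K⟦X⟧))ᶜ.ncard :=
      (isGammaModule_valueSet M).lt_ncard_compl_add_ncard_compl (finite_compl_valueSet hc)
        (finite_compl_valueSet hcM) hmM
    have hcard := ncard_compl_valueSet_add_ncard_addedGapSet hc hM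
    omega
  exact X_pow_mul_mem_of_Ici_subset_valueSet (V := M.restrictScalars K) hcM hvalues f

lemma finiteDimensional_quotient_map_X_pow (hc : ∀ f, X ^ c * f ∈ R)
    (hM : 0 ∈ valueSet (M : Set K⟦X⟧)) (a : ℕ) :
    FiniteDimensional K
      (K⟦X⟧ ⧸ (M.map (LinearMap.mulLeft R (X ^ a))).restrictScalars K) :=
  finiteDimensional_quotient
    (X_pow_mul_mem_map_X_pow (X_pow_mul_mem_of_mem_valueSet hc hM) a)

lemma finrank_quotient_map_X_pow (hc : ∀ f, X ^ c * f ∈ R)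
    (hM : 0 ∈ valueSet (M : Set K⟦X⟧)) (a : ℕ) :
    Module.finrank K (K⟦X⟧ ⧸ (M.map (LinearMap.mulLeft R (X ^ a))).restrictScalars K) =
      (gapSet R).ncard - (addedGapSet M).ncard + a := by
  have hcM : ∀ f, X ^ c * f ∈ M := X_pow_mul_mem_of_mem_valueSet hc hM
  rw [finrank_quotient_eq_ncard_compl_valueSet (X_pow_mul_mem_map_X_pow hcM a),
    Submodule.coe_restrictScalars, valueSet_map_X_pow,
    ncard_compl_image_add_left a (finite_compl_valueSet hcM),
    ← ncard_compl_valueSet_add_ncard_addedGapSet hc hM, Nat.add_sub_cancel_right]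

theorem statement2_general (R : Subalgebra K K⟦X⟧) (c : ℕ) (hc : ∀ f, X ^ c * f ∈ R) :
    (∀ M : Submodule R K⟦X⟧, 0 ∈ valueSet (M : Set K⟦X⟧) → ∀ a : ℕ,
      (∀ n, 2 * (gapSet R).ncard + a ≤ n + (addedGapSet M).ncard →
        ∀ f, X ^ n * f ∈ M.map (LinearMap.mulLeft R (X ^ a))) ∧
      FiniteDimensional K
        (K⟦X⟧ ⧸ (M.map (LinearMap.mulLeft R (X ^ a))).restrictScalars K) ∧
      Module.finrank K (K⟦X⟧ ⧸ (M.map (LinearMap.mulLeft R (X ^ a))).restrictScalars K) =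
        (gapSet R).ncard - (addedGapSet M).ncard + a) ∧
    (∀ (M : Submodule R K⟦X⟧) (d : ℕ), M ≠ ⊥ → d ≤ (gapSet R).ncard →
      Module.finrank K (K⟦X⟧ ⧸ M.restrictScalars K) = (gapSet R).ncard - d →
      (∀ x ∈ M, X ^ sInf (valueSet (M : Set K⟦X⟧)) ∣ x) ∧
      (M.comap (LinearMap.mulLeft R (X ^ sInf (valueSet (M : Set K⟦X⟧))))).FG ∧
      0 ∈ valueSet
        (M.comap (LinearMap.mulLeft R (X ^ sInf (valueSet (M : Set K⟦X⟧)))) : Set K⟦X⟧) ∧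
      (addedGapSet (M.comap (LinearMap.mulLeft R (X ^ sInf (valueSet (M : Set K⟦X⟧)))))).ncard =
        d + sInf (valueSet (M : Set K⟦X⟧))) := by
  refine ⟨fun M hM a => ⟨fun n hn f => ?_, finiteDimensional_quotient_map_X_pow hc hM a,
    finrank_quotient_map_X_pow hc hM a⟩, fun M d hM hd hrank => ?_⟩
  · have hle := ncard_compl_valueSet_add_ncard_addedGapSet hc hM
    have hmem := X_pow_mul_mem_of_two_mul_ncard_gapSet_le hc hM (n := n - a) (by omega)
    simpa only [Nat.sub_add_cancel (by omega : a ≤ n)] using X_pow_mul_mem_map_X_pow hmem a f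
  · have h0 := zero_mem_valueSet_comap_X_pow_sInf hM
    have hdim := finrank_quotient_map_X_pow hc h0 (sInf (valueSet (M : Set K⟦X⟧)))
    have hcard := ncard_compl_valueSet_add_ncard_addedGapSet hc h0
    rw [map_comap_X_pow_sInf_valueSet, hrank] at hdim
    have := isNoetherian_of_X_pow_mul_mem hc
    exact ⟨fun x hx => X_pow_sInf_valueSet_dvd hx, IsNoetherian.noetherian _, h0, by omega⟩

end ConductorSubalgebra

section ComplexNotation

variable {R : Subalgebra ℂ 𝒪} {M : Submodule R 𝒪}

lemma order_eq_ord {f : 𝒪} (hf : f ≠ 0) : f.order = ord f :=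
  order_eq_nat.2 ⟨Nat.sInf_mem (exists_coeff_ne_zero_iff_ne_zero.2 hf),
    fun _ hn => not_not.1 (Nat.notMem_of_lt_sInf hn)⟩

lemma ne_zero_and_ord_eq_iff {f : 𝒪} {n : ℕ} : f ≠ 0 ∧ ord f = n ↔ f.order = n := by
  refine ⟨fun ⟨hf, hn⟩ => hn ▸ order_eq_ord hf, fun hn => ?_⟩
  have hf : f ≠ 0 := ne_zero_of_order_eq_natCast hn
  exact ⟨hf, by exact_mod_cast (order_eq_ord hf).symm.trans hn⟩

lemma DeltaM_eq_valueSet (M : Submodule R 𝒪) : DeltaM R M = valueSet (M : Set 𝒪) := by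
  simp only [DeltaM, valueSet, ne_zero_and_ord_eq_iff, SetLike.mem_coe]

lemma Gaps_eq_gapSet (R : Subalgebra ℂ 𝒪) : Gaps R = gapSet R := by
  simp only [Gaps, SGamma, gapSet, valueSet, ne_zero_and_ord_eq_iff, SetLike.mem_coe]

lemma Dset_eq_addedGapSet (M : Submodule R 𝒪) : Dset R M = addedGapSet M := by
  rw [Dset, DeltaM_eq_valueSet, Gaps_eq_gapSet, addedGapSet]

lemma IsStd_iff : IsStd R M ↔ M.FG ∧ 0 ∈ valueSet (M : Set 𝒪) := by
  rw [← DeltaM_eq_valueSet]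
  rfl

end ComplexNotation

/-- (a) For a standard module `𝓜°` with `|D_{𝓜°}| = d°` and `0 ≤ a ≤ d°`, the
`ℛ`-submodule `z^a𝓜°` satisfies `z^{2δ}𝒪 ⊆ z^a𝓜°` and
`dim_ℂ(𝒪/z^a𝓜°) = δ − d° + a`.
(b) Conversely, if `z^{2δ}𝒪 ⊆ 𝓜` and `dim_ℂ(𝒪/𝓜) = δ − d` with `0 ≤ d ≤ δ`,
then with `a = min{ν(x) : 0 ≠ x ∈ 𝓜}` every element of `𝓜` is divisible by `z^a`
and `𝓜° = {f : z^a f ∈ 𝓜}` is a standard module with `|D_{𝓜°}| = d + a`. -/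
theorem statement2 (R : Subalgebra ℂ 𝒪) (c : ℕ) (hR : HasConductor R c) :
    (∀ (M0 : Submodule ↥R 𝒪), IsStd R M0 → ∀ d0 a : ℕ,
      (Dset R M0).ncard = d0 → a ≤ d0 →
      (∀ f : 𝒪, (PowerSeries.X : 𝒪)^(2 * (Gaps R).ncard) * f ∈
          Submodule.map (LinearMap.mulLeft ↥R ((PowerSeries.X : 𝒪)^a)) M0) ∧
      FiniteDimensional ℂ
        (𝒪 ⧸ (Submodule.map (LinearMap.mulLeft ↥R ((PowerSeries.X : 𝒪)^a)) M0).restrictScalars ℂ) ∧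
      Module.finrank ℂ
        (𝒪 ⧸ (Submodule.map (LinearMap.mulLeft ↥R ((PowerSeries.X : 𝒪)^a)) M0).restrictScalars ℂ)
        = (Gaps R).ncard - d0 + a) ∧
    (∀ (M : Submodule ↥R 𝒪) (d : ℕ), d ≤ (Gaps R).ncard →
      (∀ f : 𝒪, (PowerSeries.X : 𝒪)^(2 * (Gaps R).ncard) * f ∈ M) →
      FiniteDimensional ℂ (𝒪 ⧸ M.restrictScalars ℂ) →
      Module.finrank ℂ (𝒪 ⧸ M.restrictScalars ℂ) = (Gaps R).ncard - d →
      (∀ x ∈ M, ∃ h : 𝒪, x = (PowerSeries.X : 𝒪)^(sInf (DeltaM R M)) * h) ∧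
      IsStd R (Submodule.comap
        (LinearMap.mulLeft ↥R ((PowerSeries.X : 𝒪)^(sInf (DeltaM R M)))) M) ∧
      (Dset R (Submodule.comap
        (LinearMap.mulLeft ↥R ((PowerSeries.X : 𝒪)^(sInf (DeltaM R M)))) M)).ncard
        = d + sInf (DeltaM R M)) := by
  obtain ⟨_, hc, _⟩ := hR
  simp only [DeltaM_eq_valueSet, Gaps_eq_gapSet, Dset_eq_addedGapSet, IsStd_iff]
  obtain ⟨h_shift, h_normalize⟩ := statement2_general R c hc
  refine ⟨?_, fun M d hd hM _ hrank => ?_⟩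
  · rintro M0 ⟨_, hM0⟩ _ a rfl ha
    obtain ⟨hmem, hdim⟩ := h_shift M0 hM0 a
    exact ⟨hmem _ (by omega), hdim⟩
  · have hM0 : M ≠ ⊥ := by
      rintro rfl
      simpa using hM 1
    obtain ⟨hdvd, hfg, h0, hcard⟩ := h_normalize M d hM0 hd hrank
    exact ⟨hdvd, ⟨hfg, h0⟩, hcard⟩

end
end

section
/- Let 𝒟 = (D_0,…,D_m) be a D-flag of length m with gaps g_1 < … < g_m, and let 𝓜_0 ⊆ 𝓜_1 ⊆ … ⊆ 𝓜_m be a flag of standard modules with D_{𝓜_i} = D_i for all i. For 1 ≤ i ≤ m pick any m_i ∈ 𝓜_i with ν(m_i) = g_i. Then m_i ∉ 𝓜_0, 𝔪·m_i ⊆ 𝓜_0, and the ℂ-subspace 𝓜_0 + ℂ m_i of 𝒪 is an ℛ-submodule; moreover it is a standard module with set of added gaps D_0 ∪ {g_i}. -/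
open PowerSeries

noncomputable section

/-!
Write `Δ(𝓜)` for the set of orders of the nonzero elements of `𝓜`. Since `𝓜₀` contains a unit of
`𝒪`, it contains `z^c𝒪` and `Γ ⊆ Δ(𝓜₀)`. The gaps of `Γ` in `Δ(𝓜ᵢ)` but not in `Δ(𝓜₀)` are
`g₁ < … < gᵢ`, so every element of `Δ(𝓜ᵢ)` larger than `gᵢ` lies in `Δ(𝓜₀)`. Hence an element of
`𝓜ᵢ` of order larger than `gᵢ` can be corrected by elements of `𝓜₀`, one leading term at a time,
until it lies in `z^c𝒪`; it therefore belongs to `𝓜₀`. This applies to `𝔪mᵢ`, so modulo `𝓜₀` the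
ring `ℛ` acts on `mᵢ` through its residue field `ℂ`. Finally `gᵢ ∉ Δ(𝓜₀)`, so no cancellation of
leading terms occurs in `y + a mᵢ` with `y ∈ 𝓜₀`, and `gᵢ` is the only new order.

Orders are taken in `ℕ∞`, with `order 0 = ⊤`, so that `order '' 𝓜` is `Δ(𝓜) ∪ {⊤}`.
-/

section NoZeroDivisors

variable {A : Type*} [Semiring A] [NoZeroDivisors A]

lemma order_lt_order_mul_of_constantCoeff_eq_zero {r x : A⟦X⟧} (hr : constantCoeff r = 0)
    (hx : x ≠ 0) : x.order < (r * x).order := by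
  rw [order_mul]
  exact ENat.lt_add_left (order_eq_top.not.mpr hx)
    (pos_iff_ne_zero.mpr (order_ne_zero_iff_constCoeff_eq_zero.mpr hr))

lemma order_smul_of_ne_zero {a : A} (ha : a ≠ 0) (f : A⟦X⟧) : (a • f).order = f.order := by
  rw [smul_eq_C_mul, order_mul, ← monomial_zero_eq_C_apply, order_monomial_of_ne_zero 0 a ha,
    Nat.cast_zero, zero_add]

lemma order_image_sup_span_singleton {V : Submodule A A⟦X⟧} {x : A⟦X⟧}
    (hx : x.order ∉ order '' (V : Set A⟦X⟧)) :
    order '' ((V ⊔ A ∙ x : Submodule A A⟦X⟧) : Set A⟦X⟧) =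
      insert x.order (order '' (V : Set A⟦X⟧)) := by
  apply Set.Subset.antisymm
  · rintro _ ⟨f, hf, rfl⟩
    obtain ⟨y, hy, z, hz, rfl⟩ := Submodule.mem_sup.mp hf
    obtain ⟨a, rfl⟩ := Submodule.mem_span_singleton.mp hz
    rcases eq_or_ne a 0 with rfl | ha
    · exact Or.inr ⟨y, hy, by simp⟩
    have hne : y.order ≠ (a • x).order := by
      rw [order_smul_of_ne_zero ha]
      exact fun h => hx ⟨y, hy, h⟩
    rw [order_add_of_order_ne _ _ hne, order_smul_of_ne_zero ha]
    rcases min_choice y.order x.order with h | h <;> rw [h]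
    · exact Or.inr ⟨y, hy, rfl⟩
    · exact Or.inl rfl
  · exact Set.insert_subset
      ⟨x, Submodule.mem_sup_right (Submodule.mem_span_singleton_self x), rfl⟩
      (Set.image_mono (SetLike.coe_subset_coe.mpr le_sup_left))

end NoZeroDivisors

lemma order_image_subset_of_zero_mem {A : Type*} [CommSemiring A] [NoZeroDivisors A]
    {R : Subalgebra A A⟦X⟧} {M : Submodule R A⟦X⟧} (hM : 0 ∈ order '' (M : Set A⟦X⟧)) :
    order '' (R : Set A⟦X⟧) ⊆ order '' (M : Set A⟦X⟧) := by
  obtain ⟨u, huM, hu⟩ := hM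
  rintro _ ⟨r, hr, rfl⟩
  exact ⟨r * u, M.smul_mem ⟨r, hr⟩ huM, by rw [order_mul, hu, add_zero]⟩

-- Modulo `M`, an element `r` of `R` acts on `x` through its constant coefficient.
lemma restrictScalars_sup_span_singleton {A : Type*} [CommRing A]
    {R : Subalgebra A A⟦X⟧} {M : Submodule R A⟦X⟧} {x : A⟦X⟧}
    (hx : ∀ r ∈ R, constantCoeff r = 0 → r * x ∈ M) :
    (M ⊔ R ∙ x).restrictScalars A = M.restrictScalars A ⊔ A ∙ x := by
  apply le_antisymm
  · intro f hf
    obtain ⟨y, hy, z, hz, rfl⟩ := Submodule.mem_sup.mp hf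
    obtain ⟨r, rfl⟩ := Submodule.mem_span_singleton.mp hz
    have hr : (r : A⟦X⟧) - C (constantCoeff (r : A⟦X⟧)) ∈ R :=
      R.sub_mem r.2 (R.algebraMap_mem _)
    refine Submodule.mem_sup.mpr ⟨_, M.add_mem hy (hx _ hr (by simp)), _,
      Submodule.mem_span_singleton.mpr ⟨constantCoeff (r : A⟦X⟧), rfl⟩, ?_⟩
    rw [Subalgebra.smul_def, smul_eq_mul, smul_eq_C_mul]
    ring
  · rw [Submodule.restrictScalars_sup]
    exact sup_le_sup_left (Submodule.span_le_restrictScalars A R {x}) _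

section DivisionRing

variable {K : Type*} [DivisionRing K]

lemma exists_order_lt_order_sub_smul {f h : K⟦X⟧} (hf : f ≠ 0) (hh : h.order = f.order) :
    ∃ a : K, f.order < (f - a • h).order := by
  have hh0 : h ≠ 0 := order_eq_top.not.mp (hh ▸ order_eq_top.not.mpr hf)
  refine ⟨coeff f.order.toNat f / coeff f.order.toNat h, ?_⟩
  have hlead : coeff f.order.toNat h ≠ 0 := hh ▸ coeff_order hh0
  refine lt_of_lt_of_le (b := ((f.order.toNat + 1 : ℕ) : ℕ∞)) ?_ (nat_le_order _ _ fun n hn => ?_)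
  · rw [← coe_toNat_order hf]
    exact_mod_cast Nat.lt_succ_self _
  · rw [map_sub, map_smul, smul_eq_mul]
    rcases Nat.lt_succ_iff_lt_or_eq.mp hn with hlt | rfl
    · rw [coeff_of_lt_order_toNat n hlt, coeff_of_lt_order_toNat n (hh.symm ▸ hlt), mul_zero,
        sub_zero]
    · rw [div_mul_cancel₀ _ hlead, sub_self]

-- Cancelling leading terms against elements of `V` raises the order of `f` past `c`.
lemma mem_of_lt_order_of_order_mem_image {V W : Submodule K K⟦X⟧} (hVW : V ≤ W) {c : ℕ}
    (hc : ∀ f : K⟦X⟧, c ≤ f.order → f ∈ V) {k : ℕ∞}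
    (hk : ∀ f ∈ W, k < f.order → f.order ∈ order '' (V : Set K⟦X⟧))
    {f : K⟦X⟧} (hfW : f ∈ W) (hkf : k < f.order) : f ∈ V := by
  suffices H : ∀ t : ℕ, ∀ f ∈ W, k < f.order → (c : ℕ∞) ≤ f.order + t → f ∈ V from
    H c f hfW hkf le_add_self
  intro t
  induction t with
  | zero => exact fun f _ _ hcf => hc f (by simpa using hcf)
  | succ t ih =>
    intro f hfW hkf hcf
    rcases eq_or_ne f 0 with rfl | hf0
    · exact V.zero_mem
    obtain ⟨h, hhV, hh⟩ := hk f hfW hkf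
    obtain ⟨a, ha⟩ := exists_order_lt_order_sub_smul hf0 hh
    have hahV : a • h ∈ V := V.smul_mem a hhV
    have hct : (c : ℕ∞) ≤ (f - a • h).order + t := calc
      (c : ℕ∞) ≤ f.order + (t + 1 : ℕ) := hcf
      _ = f.order + 1 + t := by push_cast; ring
      _ ≤ (f - a • h).order + t := by gcongr; exact Order.add_one_le_of_lt ha
    exact (V.sub_mem_iff_left hahV).mp
      (ih _ (W.sub_mem hfW (hVW hahV)) (hkf.trans ha) hct)

end DivisionRing

section Field

variable {K : Type*} [Field K] {R : Subalgebra K K⟦X⟧} {M N : Submodule R K⟦X⟧} {x : K⟦X⟧}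

lemma mem_of_le_order {c : ℕ} (hc : ∀ f : K⟦X⟧, X ^ c * f ∈ R)
    (hM : 0 ∈ order '' (M : Set K⟦X⟧)) {f : K⟦X⟧} (hf : c ≤ f.order) : f ∈ M := by
  obtain ⟨u, huM, hu⟩ := hM
  have hu0 : constantCoeff u ≠ 0 := fun h => order_ne_zero_iff_constCoeff_eq_zero.mpr h hu
  obtain ⟨h, rfl⟩ : X ^ c ∣ f :=
    X_pow_dvd_iff.mpr fun n hn => coeff_of_lt_order n (lt_of_lt_of_le (by exact_mod_cast hn) hf)
  have hmem : X ^ c * (h * u⁻¹) * u ∈ M := M.smul_mem ⟨_, hc (h * u⁻¹)⟩ huM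
  rwa [mul_assoc, mul_assoc, PowerSeries.inv_mul_cancel u hu0, mul_one] at hmem

theorem statement3_general {c : ℕ} (hc : ∀ f : K⟦X⟧, X ^ c * f ∈ R) (hMfg : M.FG)
    (hM : 0 ∈ order '' (M : Set K⟦X⟧)) (hMN : M ≤ N) (hxN : x ∈ N)
    (hx : x.order ∉ order '' (M : Set K⟦X⟧))
    (hN : ∀ f ∈ N, x.order < f.order → f.order ∈ order '' (M : Set K⟦X⟧)) :
    x ∉ M ∧
    (∀ r ∈ R, constantCoeff r = 0 → r * x ∈ M) ∧
    ∃ P : Submodule R K⟦X⟧,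
      P.restrictScalars K = M.restrictScalars K ⊔ K ∙ x ∧
      P.FG ∧ order '' (P : Set K⟦X⟧) = insert x.order (order '' (M : Set K⟦X⟧)) := by
  have hxM : x ∉ M := fun h => hx ⟨x, h, rfl⟩
  have hx0 : x ≠ 0 := fun h => hxM (h ▸ M.zero_mem)
  have hmul (r : K⟦X⟧) (hr : r ∈ R) (hr0 : constantCoeff r = 0) : r * x ∈ M :=
    mem_of_lt_order_of_order_mem_image (V := M.restrictScalars K) (W := N.restrictScalars K) hMN
      (fun _ => mem_of_le_order hc hM) hN (N.smul_mem ⟨r, hr⟩ hxN)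
      (order_lt_order_mul_of_constantCoeff_eq_zero hr0 hx0)
  have hP := restrictScalars_sup_span_singleton hmul
  refine ⟨hxM, hmul, M ⊔ R ∙ x, hP, hMfg.sup (Submodule.fg_span_singleton x), ?_⟩
  rw [← Submodule.coe_restrictScalars K, hP]
  exact order_image_sup_span_singleton hx

end Field

section Complex

variable {R : Subalgebra ℂ 𝒪} {M N : Submodule R 𝒪}

lemma coe_ord {f : 𝒪} (hf : f ≠ 0) : (ord f : ℕ∞) = f.order := by
  rw [← coe_toNat_order hf]
  norm_cast
  refine IsLeast.csInf_eq ⟨coeff_order hf, fun n hn => ?_⟩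
  by_contra hlt
  exact hn (coeff_of_lt_order_toNat n (not_le.mp hlt))

lemma natCast_mem_order_image {S : Set 𝒪} {n : ℕ} :
    (n : ℕ∞) ∈ order '' S ↔ ∃ f ∈ S, f ≠ 0 ∧ ord f = n := by
  refine exists_congr fun f => and_congr_right fun _ => ⟨fun h => ?_, ?_⟩
  · have hf : f ≠ 0 := order_eq_top.not.mp (h ▸ ENat.natCast_ne_top n)
    exact ⟨hf, by exact_mod_cast (coe_ord hf).trans h⟩
  · rintro ⟨hf, rfl⟩
    exact (coe_ord hf).symm

lemma DeltaM_eq_preimage : DeltaM R M = (↑) ⁻¹' (order '' (M : Set 𝒪)) :=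
  Set.ext fun _ => natCast_mem_order_image.symm

lemma SGamma_eq_preimage : SGamma R = (↑) ⁻¹' (order '' (R : Set 𝒪)) :=
  Set.ext fun _ => natCast_mem_order_image.symm

lemma constantCoeff_eq_zero_of_ord_pos {f : 𝒪} (hf : f = 0 ∨ 0 < ord f) :
    constantCoeff f = 0 := by
  rcases eq_or_ne f 0 with rfl | hf0
  · exact map_zero _
  · rw [← order_ne_zero_iff_constCoeff_eq_zero, ← coe_ord hf0]
    exact_mod_cast (hf.resolve_left hf0).ne'

lemma IsStd.zero_mem_order_image (hM : IsStd R M) : 0 ∈ order '' (M : Set 𝒪) :=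
  natCast_mem_order_image.mpr hM.2

lemma IsStd.SGamma_subset_DeltaM (hM : IsStd R M) : SGamma R ⊆ DeltaM R M := by
  rw [SGamma_eq_preimage, DeltaM_eq_preimage]
  exact Set.preimage_mono (order_image_subset_of_zero_mem hM.zero_mem_order_image)

lemma Dset_eq_insert {x : 𝒪} (hx : x ≠ 0) (hG : ord x ∈ Gaps R)
    (hN : order '' (N : Set 𝒪) = insert x.order (order '' (M : Set 𝒪))) :
    Dset R N = insert (ord x) (Dset R M) := by
  have hΔ : DeltaM R N = insert (ord x) (DeltaM R M) := by
    rw [DeltaM_eq_preimage, DeltaM_eq_preimage, hN, ← coe_ord hx]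
    ext n
    simp only [Set.mem_preimage, Set.mem_insert_iff, Nat.cast_inj]
  rw [Dset, hΔ, Set.insert_inter_of_mem hG, Dset]

lemma order_mem_image_iff {f : 𝒪} (hf : f ≠ 0) :
    f.order ∈ order '' (M : Set 𝒪) ↔ ord f ∈ DeltaM R M := by
  rw [DeltaM_eq_preimage, Set.mem_preimage, coe_ord hf]

lemma order_mem_image_of_lt_order {x : 𝒪} (hx : x ≠ 0)
    (h : ∀ n ∈ DeltaM R N, ord x < n → n ∈ DeltaM R M) {f : 𝒪} (hfN : f ∈ N)
    (hxf : x.order < f.order) : f.order ∈ order '' (M : Set 𝒪) := by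
  rcases eq_or_ne f 0 with rfl | hf
  · exact ⟨0, M.zero_mem, rfl⟩
  · rw [← coe_ord hx, ← coe_ord hf, Nat.cast_lt] at hxf
    exact (order_mem_image_iff hf).mpr (h _ ⟨f, hfN, hf, rfl⟩ hxf)

lemma DFlagSet_zero (D0 : Set ℕ) (g : ℕ → ℕ) : DFlagSet D0 g 0 = D0 := by
  simp [DFlagSet]

lemma IsStd.mem_DeltaM_of_lt {g : ℕ → ℕ} {i n : ℕ} (hM : IsStd R M)
    (hg : MonotoneOn g (Set.Icc 1 i)) (hN : Dset R N = DFlagSet (Dset R M) g i)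
    (hn : n ∈ DeltaM R N) (hlt : g i < n) : n ∈ DeltaM R M := by
  by_cases hΓ : n ∈ SGamma R
  · exact hM.SGamma_subset_DeltaM hΓ
  have hnD : n ∈ DFlagSet (Dset R M) g i := hN ▸ ⟨hn, hΓ⟩
  rcases hnD with hnM | ⟨j, hj, rfl⟩
  · exact hnM.1
  · exact absurd hlt (hg hj ⟨hj.1.trans hj.2, le_rfl⟩ hj.2).not_gt

end Complex

/-- Given a flag of standard modules realizing a `D`-flag and `m_i ∈ 𝓜_i` with
`ν(m_i) = g_i`: then `m_i ∉ 𝓜_0`, `𝔪·m_i ⊆ 𝓜_0`, and the `ℂ`-subspace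
`𝓜_0 + ℂm_i` is an `ℛ`-submodule, indeed a standard module with set of added
gaps `D_0 ∪ {g_i}`. -/
theorem statement3 (R : Subalgebra ℂ 𝒪) (c : ℕ) (hR : HasConductor R c)
    (m : ℕ) (D0 : Set ℕ) (g : ℕ → ℕ) (hflag : IsDFlag R m D0 g)
    (MM : ℕ → Submodule ↥R 𝒪)
    (hmono : ∀ i, i < m → MM i ≤ MM (i+1))
    (hstd : ∀ i ≤ m, IsStd R (MM i))
    (hD : ∀ i ≤ m, Dset R (MM i) = DFlagSet D0 g i)
    (i : ℕ) (h1 : 1 ≤ i) (him : i ≤ m)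
    (mi : 𝒪) (hmi : mi ∈ MM i) (hne : mi ≠ 0) (hord : ord mi = g i) :
    mi ∉ MM 0 ∧
    (∀ r ∈ (R : Set 𝒪), (r = 0 ∨ 0 < ord r) → r * mi ∈ MM 0) ∧
    ∃ N : Submodule ↥R 𝒪,
      (N : Set 𝒪) = (((MM 0).restrictScalars ℂ ⊔ (ℂ ∙ mi) : Submodule ℂ 𝒪) : Set 𝒪) ∧
      IsStd R N ∧ Dset R N = D0 ∪ {g i} := by
  obtain ⟨-, hg, hgap, -⟩ := hflag
  obtain ⟨hgG, hgD⟩ := hgap i h1 him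
  have hM := hstd 0 m.zero_le
  have hle : MM 0 ≤ MM i :=
    monotoneOn_of_le_add_one Set.ordConnected_Iic (fun j _ _ hj => hmono j hj)
      m.zero_le him i.zero_le
  have hD₀ : Dset R (MM 0) = D0 := (hD 0 m.zero_le).trans (DFlagSet_zero D0 g)
  have hnew : mi.order ∉ order '' (MM 0 : Set 𝒪) := by
    rw [order_mem_image_iff hne, hord]
    exact fun h => hgD (hD₀ ▸ ⟨h, hgG⟩)
  have habove : ∀ n ∈ DeltaM R (MM i), ord mi < n → n ∈ DeltaM R (MM 0) := fun _ hn hlt =>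
    hM.mem_DeltaM_of_lt (hg.monotoneOn.mono (Set.Icc_subset_Icc_right him))
      (hD₀.symm ▸ hD i him) hn (hord ▸ hlt)
  obtain ⟨hmiM, hmul, P, hP, hPfg, hPord⟩ := statement3_general hR.2.1 hM.1
    hM.zero_mem_order_image hle hmi hnew fun _ => order_mem_image_of_lt_order hne habove
  refine ⟨hmiM, fun r hr h => hmul r hr (constantCoeff_eq_zero_of_ord_pos h), P, hP ▸ rfl,
    ⟨hPfg, natCast_mem_order_image.mp (hPord ▸ Or.inr hM.zero_mem_order_image)⟩, ?_⟩
  rw [Dset_eq_insert hne (hord ▸ hgG) hPord, hD₀, hord, Set.union_singleton]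

end
end
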